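/- arXiv:1305.6814 — 6 statements merged into one kernel-verified Lean document; each statement's English description precedes it below -/
import Mathlib

section
/- Let (Z, ⟨·,·⟩_Z) and (V, ⟨·,·⟩_V) be finite-dimensional real vector spaces with nondegenerate symmetric bilinear forms, and let J : Z → End(V) be a linear map. Consider the three conditions: (i) orthogonality: ⟨J_z u, J_z v⟩_V = ⟨z,z⟩_Z·⟨u,v⟩_V for all z ∈ Z, u,v ∈ V; (ii) Clifford condition: J_z∘J_z = −⟨z,z⟩_Z·Id_V for all z ∈ Z; (iii) skew-symmetry: ⟨J_z u, v⟩_V = −⟨u, J_z v⟩_V for all z ∈ Z, u,v ∈ V. Then any two of the conditions (i), (ii), (iii) imply the third. -/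
/-!
Skew-symmetry from orthogonality and the Clifford condition is the only case with content. Applying
orthogonality to `u` and `J_z v` gives `⟨z,z⟩ (⟨J_z u, v⟩ + ⟨u, J_z v⟩) = 0`, which settles every
non-null `z`. The bracket is linear in `z`, and the non-null vectors of a nonzero symmetric form span
the space: if `w` is non-null and `z` is null, then `z + w` and `z - w` cannot both be null, because
their squares add up to `2⟨w,w⟩`. If no non-null vector exists, the form vanishes by polarization, so
nondegeneracy forces `z = 0`.

The Clifford condition from the other two follows from nondegeneracy of the form on `V`, and
orthogonality from the other two by direct substitution.
-/

/-- A linear functional vanishing on all non-null vectors of a nondegenerate symmetric form is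
zero, i.e. the non-null vectors span. -/
theorem functional_eq_zero_of_nonnull {Z : Type*} [AddCommGroup Z] [Module ℝ Z]
    (B : LinearMap.BilinForm ℝ Z) (hsymm : ∀ x y : Z, B x y = B y x)
    (hnd : LinearMap.BilinForm.Nondegenerate B) (f : Z →ₗ[ℝ] ℝ)
    (hf : ∀ z, B z z ≠ 0 → f z = 0) (z : Z) : f z = 0 := by
  by_cases hw : ∃ w, B w w ≠ 0
  · obtain ⟨w, hw⟩ := hw
    by_cases hz : B z z = 0
    · have hfw := hf w hw
      by_cases hp : B (z + w) (z + w) = 0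
      · have hm : B (z - w) (z - w) ≠ 0 := by
          intro hm
          apply hw
          simp only [map_add, map_sub, LinearMap.add_apply, LinearMap.sub_apply] at hp hm
          linarith
        have h := hf _ hm
        rw [map_sub] at h
        linarith
      · have h := hf _ hp
        rw [map_add] at h
        linarith
    · exact hf z hz
  · push Not at hw
    have hz : z = 0 := by
      refine hnd.1 z fun y => ?_
      have h := hw (z + y)
      simp only [map_add, LinearMap.add_apply] at h
      linarith [hw z, hw y, hsymm z y]
    rw [hz, map_zero]

/-- Among the three conditions — (i) orthogonality `⟨J_z u, J_z v⟩ = ⟨z,z⟩⟨u,v⟩`,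
(ii) the Clifford condition `J_z ∘ J_z = -⟨z,z⟩·Id`, and (iii) skew-symmetry
`⟨J_z u, v⟩ = -⟨u, J_z v⟩` — any two imply the third. -/
theorem two_of_three_conditions
    (Z V : Type*) [AddCommGroup Z] [Module ℝ Z] [AddCommGroup V] [Module ℝ V]
    [FiniteDimensional ℝ Z] [FiniteDimensional ℝ V]
    (BZ : LinearMap.BilinForm ℝ Z) (BV : LinearMap.BilinForm ℝ V)
    (hZsymm : ∀ x y : Z, BZ x y = BZ y x)
    (hZnd : LinearMap.BilinForm.Nondegenerate BZ)
    (hVsymm : ∀ x y : V, BV x y = BV y x)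
    (hVnd : LinearMap.BilinForm.Nondegenerate BV)
    (J : Z →ₗ[ℝ] V →ₗ[ℝ] V) :
    (((∀ (z : Z) (u v : V), BV (J z u) (J z v) = BZ z z * BV u v) ∧
        (∀ (z : Z) (v : V), J z (J z v) = -(BZ z z) • v)) →
      ∀ (z : Z) (u v : V), BV (J z u) v = -BV u (J z v)) ∧
    (((∀ (z : Z) (u v : V), BV (J z u) (J z v) = BZ z z * BV u v) ∧
        (∀ (z : Z) (u v : V), BV (J z u) v = -BV u (J z v))) →
      ∀ (z : Z) (v : V), J z (J z v) = -(BZ z z) • v) ∧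
    (((∀ (z : Z) (v : V), J z (J z v) = -(BZ z z) • v) ∧
        (∀ (z : Z) (u v : V), BV (J z u) v = -BV u (J z v))) →
      ∀ (z : Z) (u v : V), BV (J z u) (J z v) = BZ z z * BV u v) := by
  refine ⟨?_, ?_, ?_⟩
  · rintro ⟨ho, hc⟩ z u v
    -- the symmetrized expression, as a linear functional of `z`
    let f : Z →ₗ[ℝ] ℝ :=
      { toFun := fun z => BV (J z u) v + BV u (J z v)
        map_add' := fun x y => by
          simp only [map_add, LinearMap.add_apply]
          ring
        map_smul' := fun c x => by
          simp only [map_smul, LinearMap.smul_apply, smul_eq_mul, RingHom.id_apply]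
          ring }
    have hfz : f z = 0 := by
      refine functional_eq_zero_of_nonnull BZ hZsymm hZnd f (fun x hx => ?_) z
      have h := ho x u (J x v)
      rw [hc, map_smul, smul_eq_mul] at h
      apply mul_left_cancel₀ hx
      change BZ x x * (BV (J x u) v + BV u (J x v)) = BZ x x * 0
      linarith
    change BV (J z u) v + BV u (J z v) = 0 at hfz
    linarith
  · rintro ⟨ho, hs⟩ z v
    rw [← sub_eq_zero]
    refine hVnd.1 _ fun w => ?_
    simp only [map_sub, map_smul, LinearMap.sub_apply, LinearMap.smul_apply, smul_eq_mul]
    rw [hs, ho]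
    ring
  · rintro ⟨hc, hs⟩ z u v
    rw [hs, hc, map_smul, smul_eq_mul]
    ring
end

section
/- Let (V, ⟨·,·⟩_V, J_1,…,J_{r+s}) be a nonzero admissible Cl_{r,s}-module with s ≥ 1. Then the scalar product space (V, ⟨·,·⟩_V) is neutral: the maximal dimension of a subspace on which ⟨·,·⟩_V is positive definite equals the maximal dimension of a subspace on which it is negative definite; in particular the dimension of V is even. -/
/-!
Since `s ≥ 1`, one of the operators, say `T`, satisfies `T² = 1` and `B (T u) v = -B u (T v)`,
hence `B (T u) (T u) = -B u u`. So `T` is an injective map that reverses the sign of the form: it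
carries positive definite subspaces to negative definite ones of the same dimension, and
conversely, so the two indices are suprema of the same set of dimensions.

For the parity of `dim V`, nondegeneracy of `B` identifies the dual map of `T` with `-T` up to
conjugation. Therefore `det T = det (-T) = (-1) ^ dim V * det T`, and `det T ≠ 0`.
-/

/-- An involution of a finite-dimensional real space that is skew-adjoint for a
nondegenerate form exists only in even dimension, because the determinants of `T` and `-T`
agree. -/
lemma even_finrank_of_skew_involution {V : Type*} [AddCommGroup V] [Module ℝ V]
    [FiniteDimensional ℝ V] (B : LinearMap.BilinForm ℝ V)
    (hnd : LinearMap.BilinForm.Nondegenerate B) (T : V →ₗ[ℝ] V)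
    (hT : T ∘ₗ T = LinearMap.id) (hskew : ∀ u v, B (T u) v = -B u (T v)) :
    Even (Module.finrank ℝ V) := by
  let e := LinearMap.BilinForm.toDual B hnd
  have hconj : (e : V →ₗ[ℝ] Module.Dual ℝ V) ∘ₗ (-T) ∘ₗ (e.symm : Module.Dual ℝ V →ₗ[ℝ] V)
      = T.dualMap := by
    ext f v
    obtain ⟨u, rfl⟩ := e.surjective f
    simp [e, LinearMap.BilinForm.toDual_def, hskew]
  have hdet : LinearMap.det (-T) = LinearMap.det T := by
    rw [← LinearMap.det_dualMap (f := T), ← hconj, LinearMap.det_conj]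
  have hne : LinearMap.det T ≠ 0 := by
    intro h
    have h1 := congrArg LinearMap.det hT
    rw [LinearMap.det_comp, h] at h1
    simp at h1
  rw [← neg_one_smul ℝ T, LinearMap.det_smul] at hdet
  by_contra hodd
  rw [(Nat.not_even_iff_odd.mp hodd).neg_one_pow] at hdet
  apply hne
  linarith

/-- An injective operator that negates the diagonal values of `B` turns a subspace on which
`B` has the sign `ε` into one of the same dimension on which `B` has the sign `-ε`. -/
lemma exists_opposite_sign_subspace {V : Type*} [AddCommGroup V] [Module ℝ V]
    (B : LinearMap.BilinForm ℝ V) (T : V →ₗ[ℝ] V) (hinj : Function.Injective T)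
    (hB : ∀ u, B (T u) (T u) = -B u u) (ε : ℝ) (W : Submodule ℝ V)
    (hW : ∀ w ∈ W, w ≠ 0 → 0 < ε * B w w) :
    (∀ w ∈ W.map T, w ≠ 0 → 0 < -ε * B w w) ∧
      Module.finrank ℝ (W.map T) = Module.finrank ℝ W := by
  refine ⟨?_, (Submodule.equivMapOfInjective T hinj W).finrank_eq.symm⟩
  rintro _ ⟨u, hu, rfl⟩ hne
  have h := hW u hu (fun h0 => hne (by simp [h0]))
  rw [hB]
  linarith


/-- The maximal dimension of a subspace on which the bilinear form `B` is positive definite. -/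
noncomputable def posIndex {V : Type*} [AddCommGroup V] [Module ℝ V]
    (B : LinearMap.BilinForm ℝ V) : ℕ :=
  sSup {n : ℕ | ∃ W : Submodule ℝ V, (∀ w ∈ W, w ≠ 0 → 0 < B w w) ∧ Module.finrank ℝ W = n}

/-- The maximal dimension of a subspace on which the bilinear form `B` is negative definite. -/
noncomputable def negIndex {V : Type*} [AddCommGroup V] [Module ℝ V]
    (B : LinearMap.BilinForm ℝ V) : ℕ :=
  sSup {n : ℕ | ∃ W : Submodule ℝ V, (∀ w ∈ W, w ≠ 0 → B w w < 0) ∧ Module.finrank ℝ W = n}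

/-- A nonzero admissible `Cl_{r,s}`-module with `s ≥ 1` is a neutral scalar product space;
in particular its dimension is even. -/
theorem admissible_module_neutral (r s : ℕ) (hs : 1 ≤ s)
    (V : Type*) [AddCommGroup V] [Module ℝ V] [FiniteDimensional ℝ V] [Nontrivial V]
    (B : LinearMap.BilinForm ℝ V) (J : Fin (r + s) → V →ₗ[ℝ] V)
    (hsymm : ∀ x y : V, B x y = B y x)
    (hnd : LinearMap.BilinForm.Nondegenerate B)
    (hneg : ∀ i : Fin (r + s), (i : ℕ) < r → J i ∘ₗ J i = -LinearMap.id)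
    (hpos : ∀ i : Fin (r + s), r ≤ (i : ℕ) → J i ∘ₗ J i = LinearMap.id)
    (hanti : ∀ i j, i ≠ j → J i ∘ₗ J j = -(J j ∘ₗ J i))
    (hskew : ∀ k u v, B (J k u) v = -B u (J k v)) :
    posIndex B = negIndex B ∧ Even (Module.finrank ℝ V) := by
  let k : Fin (r + s) := ⟨r, by omega⟩
  have hT : J k ∘ₗ J k = LinearMap.id := hpos k le_rfl
  have hTT : ∀ u, J k (J k u) = u := fun u => LinearMap.congr_fun hT u
  have hinj : Function.Injective (J k) := Function.LeftInverse.injective hTT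
  have hB : ∀ u, B (J k u) (J k u) = -B u u := fun u => by rw [hskew, hTT]
  refine ⟨?_, even_finrank_of_skew_involution B hnd (J k) hT (hskew k)⟩
  unfold posIndex negIndex
  congr 1
  ext n
  constructor
  · rintro ⟨W, hW, rfl⟩
    obtain ⟨h1, h2⟩ := exists_opposite_sign_subspace B (J k) hinj hB 1 W (by simpa using hW)
    exact ⟨W.map (J k), by simpa using h1, h2⟩
  · rintro ⟨W, hW, rfl⟩
    obtain ⟨h1, h2⟩ := exists_opposite_sign_subspace B (J k) hinj hB (-1) W (by simpa using hW)
    exact ⟨W.map (J k), by simpa using h1, h2⟩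
end

section
/- Let (V, ⟨·,·⟩_V) be a scalar product space and Ω : V → V a symmetric linear operator with Ω∘Ω = −Id. Then for every w ∈ V with ⟨w,w⟩_V = 1 there exist λ ∈ ℝ and μ > 0 such that the vector w̃ = μ(w + λΩw) satisfies ⟨w̃, w̃⟩_V = 1 and ⟨w̃, Ω w̃⟩_V = 0. -/
/-! With `a = ⟨w, Ω w⟩`, symmetry and `Ω² = -1` give `⟨Ω w, Ω w⟩ = -1`. For `u = w + λ Ω w` this
yields `⟨u, u⟩ = 1 + 2 λ a - λ²` and `⟨u, Ω u⟩ = a - 2 λ - a λ²`. Writing `s = √(1 + a²)`, the root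
`λ = a / (s + 1)` of the second expression makes the first equal to `2 s² / (s + 1) > 0`, so
`u` can be normalized by `μ = ⟨u, u⟩^(-1/2)`. -/

/-- If `Ω` is a symmetric operator with `Ω ∘ Ω = -Id` on a scalar product space, then every
`w` with `⟨w,w⟩ = 1` can be corrected to `w̃ = μ(w + λ Ω w)` (with `μ > 0`) satisfying
`⟨w̃, w̃⟩ = 1` and `⟨w̃, Ω w̃⟩ = 0`. -/
theorem orthogonalization_single
    (V : Type*) [AddCommGroup V] [Module ℝ V] [FiniteDimensional ℝ V]
    (B : LinearMap.BilinForm ℝ V)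
    (hsymm : ∀ x y : V, B x y = B y x)
    (hnd : LinearMap.BilinForm.Nondegenerate B)
    (Ω : V →ₗ[ℝ] V)
    (hΩsym : ∀ v w : V, B (Ω v) w = B v (Ω w))
    (hΩ2 : Ω ∘ₗ Ω = -LinearMap.id) :
    ∀ w : V, B w w = 1 →
      ∃ lam mu : ℝ, 0 < mu ∧
        B (mu • (w + lam • Ω w)) (mu • (w + lam • Ω w)) = 1 ∧
        B (mu • (w + lam • Ω w)) (Ω (mu • (w + lam • Ω w))) = 0 := by
  intro w hw
  have hΩΩ : Ω (Ω w) = -w := by simpa using LinearMap.congr_fun hΩ2 w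
  obtain ⟨a, ha⟩ : ∃ a, B w (Ω w) = a := ⟨_, rfl⟩
  have ha' : B (Ω w) w = a := by rw [hΩsym, ha]
  have hb : B (Ω w) (Ω w) = -1 := by rw [hΩsym, hΩΩ, map_neg, hw]
  obtain ⟨s, hs⟩ : ∃ s, √(1 + a ^ 2) = s := ⟨_, rfl⟩
  have hs0 : 0 < s := hs ▸ Real.sqrt_pos.2 (by positivity)
  have hs2 : s ^ 2 = 1 + a ^ 2 := hs ▸ Real.sq_sqrt (by positivity)
  have hs1 : s + 1 ≠ 0 := by positivity
  obtain ⟨l, hl⟩ : ∃ l, a / (s + 1) = l := ⟨_, rfl⟩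
  have hal : a = l * (s + 1) := by rw [← hl]; field_simp
  have hla : l * a = s - 1 := by
    rw [← hl]; field_simp; linarith
  have hN : 0 < 1 + 2 * (l * a) - l ^ 2 := by
    have h : 1 + 2 * (l * a) - l ^ 2 = 2 * s ^ 2 / (s + 1) := by
      rw [hla, ← hl]; field_simp; linear_combination hs2
    rw [h]; positivity
  obtain ⟨m, hm⟩ : ∃ m, (√(1 + 2 * (l * a) - l ^ 2))⁻¹ = m := ⟨_, rfl⟩
  have hm0 : 0 < m := hm ▸ inv_pos.2 (Real.sqrt_pos.2 hN)
  have hm2 : m ^ 2 * (1 + 2 * (l * a) - l ^ 2) = 1 := by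
    rw [← hm, inv_pow, Real.sq_sqrt hN.le, inv_mul_cancel₀ hN.ne']
  refine ⟨l, m, hm0, ?_, ?_⟩
  · simp only [map_add, map_smul, LinearMap.add_apply, LinearMap.smul_apply, smul_eq_mul,
      hw, ha, ha', hb]
    linear_combination hm2
  · simp only [map_add, map_smul, map_neg, LinearMap.add_apply, LinearMap.smul_apply, smul_eq_mul,
      hΩΩ, hw, ha, ha', hb]
    linear_combination m ^ 2 * hal - m ^ 2 * l * hla
end

section
/- Let (V, ⟨·,·⟩_V) be a scalar product space and Ω_1,…,Ω_l symmetric linear operators on V such that Ω_k∘Ω_k = −Id for every k and Ω_k∘Ω_j = −Ω_j∘Ω_k for all k ≠ j. If there exists w ∈ V with ⟨w,w⟩_V = 1, then there exists w̃ ∈ V with ⟨w̃, w̃⟩_V = 1 and ⟨w̃, Ω_k w̃⟩_V = 0 for every k = 1,…,l. -/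
/-!
Write `a_k = B w (Ω_k w)`, `A = ∑ a_k²` and `C = ∑ a_k Ω_k`. The Clifford relations give
`Ω_k C + C Ω_k = -2 a_k` and `C² = -A`, so for `u = s w + C w` with `s` real,

* `B u (Ω_k u) = a_k (s² - 2 s - A)`,
* `B u u = s² - A + 2 s A`.

The root `s = 1 + r`, `r = √(1 + A)`, of the first quadratic makes `u` orthogonal to every `Ω_k u`,
and then `B u u = 2 (1 + r) r² > 0`, so `u` can be rescaled to square-length one.
-/

/-- Given symmetric, pairwise anticommuting operators `Ω_1, …, Ω_l` with `Ω_k ∘ Ω_k = -Id`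
on a scalar product space that contains a vector of square-length one, there is a vector
`w̃` with `⟨w̃, w̃⟩ = 1` and `⟨w̃, Ω_k w̃⟩ = 0` for every `k`. -/
theorem orthogonalization_family
    (V : Type*) [AddCommGroup V] [Module ℝ V] [FiniteDimensional ℝ V]
    (B : LinearMap.BilinForm ℝ V)
    (hsymm : ∀ x y : V, B x y = B y x)
    (hnd : LinearMap.BilinForm.Nondegenerate B)
    (l : ℕ) (Ω : Fin l → V →ₗ[ℝ] V)
    (hΩsym : ∀ k (v w : V), B (Ω k v) w = B v (Ω k w))
    (hΩ2 : ∀ k, Ω k ∘ₗ Ω k = -LinearMap.id)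
    (hΩanti : ∀ k j, k ≠ j → Ω k ∘ₗ Ω j = -(Ω j ∘ₗ Ω k))
    (w : V) (hw : B w w = 1) :
    ∃ wt : V, B wt wt = 1 ∧ ∀ k, B wt (Ω k wt) = 0 := by
  set a : Fin l → ℝ := fun k => B w (Ω k w) with ha
  set A : ℝ := ∑ k, a k ^ 2 with hA
  set C : V →ₗ[ℝ] V := ∑ k, a k • Ω k with hC
  have hCv : ∀ v, C v = ∑ k, a k • Ω k v := fun v => by simp [hC]
  have hCsym : ∀ v v', B (C v) v' = B v (C v') := fun v v' => by
    simp [hCv, hΩsym]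
  have hcliff : ∀ k j v, Ω k (Ω j v) + Ω j (Ω k v) = if k = j then (-2 : ℝ) • v else 0 := by
    intro k j v
    split_ifs with h
    · subst h
      have h1 : Ω k (Ω k v) = -v := by simpa using LinearMap.congr_fun (hΩ2 k) v
      rw [h1]
      module
    · have h1 : Ω k (Ω j v) = -(Ω j (Ω k v)) := by
        simpa using LinearMap.congr_fun (hΩanti k j h) v
      rw [h1]
      module
  have hΩC : ∀ k v, Ω k (C v) + C (Ω k v) = (-2 * a k) • v := by
    intro k v
    have h1 : Ω k (C v) + C (Ω k v) = ∑ j, a j • (Ω k (Ω j v) + Ω j (Ω k v)) := by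
      simp [hCv, Finset.sum_add_distrib]
    rw [h1]
    simp only [hcliff, smul_ite, smul_zero, Finset.sum_ite_eq, Finset.mem_univ, if_true, smul_smul]
    rw [mul_comm]
  -- Averaging the relations `Ω_k C + C Ω_k = -2 a_k` with weights `a_k` yields `2 C² = -2 A`.
  have hCC : ∀ v, C (C v) = (-A) • v := by
    intro v
    have h1 : C (C v) + C (C v) = ∑ k, a k • (Ω k (C v) + C (Ω k v)) := by
      have h2 : C (C v) = ∑ k, a k • C (Ω k v) := by
        conv_lhs => rw [hCv v]
        simp only [map_sum, map_smul]
      simp only [smul_add, Finset.sum_add_distrib]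
      rw [← h2, ← hCv (C v)]
    have h2 : ∑ k, a k • (Ω k (C v) + C (Ω k v)) = (-2 * A) • v := by
      simp only [hΩC, smul_smul, ← Finset.sum_smul]
      congr 1
      rw [hA, Finset.mul_sum]
      exact Finset.sum_congr rfl fun k _ => by ring
    have h3 : (2 : ℝ) • C (C v) = (2 : ℝ) • ((-A) • v) := by
      rw [two_smul, h1, h2, smul_smul]
      congr 1
      ring
    exact smul_right_injective V (two_ne_zero (α := ℝ)) h3
  have hwC : B w (C w) = A := by
    simp only [hCv, map_sum, map_smul, smul_eq_mul, hA]
    exact Finset.sum_congr rfl fun k _ => by simp only [ha]; ring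
  have hA0 : 0 ≤ A := Finset.sum_nonneg fun k _ => sq_nonneg _
  obtain ⟨r, hr0, hr⟩ : ∃ r : ℝ, 0 < r ∧ r ^ 2 = 1 + A :=
    ⟨√(1 + A), by positivity, Real.sq_sqrt (by positivity)⟩
  set u : V := (1 + r) • w + C w with hu
  have huu : B u u = 2 * (1 + r) * r ^ 2 := by
    have h1 : B (C w) w = A := by rw [hsymm, hwC]
    have h2 : B (C w) (C w) = -A := by rw [hCsym, hCC]; simp [hw]
    simp only [hu, map_add, map_smul, LinearMap.add_apply, LinearMap.smul_apply, smul_eq_mul,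
      hw, hwC, h1, h2]
    linear_combination (-1 - 2 * r) * hr
  have huΩ : ∀ k, B u (Ω k u) = 0 := by
    intro k
    have h0 : B w (Ω k w) = a k := rfl
    have h1 : B w (Ω k (C w)) + B (C w) (Ω k w) = -2 * a k := by
      rw [hCsym, ← map_add, hΩC]
      simp [hw]
    have h2 : B (C w) (Ω k (C w)) = A * a k - 2 * a k * A := by
      have h3 : Ω k (C w) = (-2 * a k) • w - C (Ω k w) := eq_sub_of_add_eq (hΩC k w)
      rw [hCsym, h3, map_sub, map_smul, hCC, map_sub, map_smul, map_smul, hwC, h0]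
      simp only [smul_eq_mul]
      ring
    simp only [hu, map_add, map_smul, LinearMap.add_apply, LinearMap.smul_apply, smul_eq_mul, h0, h2]
    linear_combination (1 + r) * h1 + a k * hr
  have hpos : 0 < B u u := by rw [huu]; positivity
  refine ⟨(√(B u u))⁻¹ • u, ?_, fun k => ?_⟩
  · simp only [map_smul, LinearMap.smul_apply, smul_eq_mul]
    rw [← mul_assoc, ← mul_inv, Real.mul_self_sqrt hpos.le, inv_mul_cancel₀ hpos.ne']
  · simp [huΩ k]
end

section
/- Let (V, ⟨·,·⟩_V) be a scalar product space, Ω_1,…,Ω_l symmetric linear operators on V with Ω_k∘Ω_k = −Id for every k and Ω_k∘Ω_j = −Ω_j∘Ω_k for all k ≠ j, and let P : V → V be a linear operator with P∘P = Id and P∘Ω_k = Ω_k∘P for every k. If w ∈ V satisfies Pw = w and ⟨w,w⟩_V = 1, then there exists w̃ ∈ V with Pw̃ = w̃, ⟨w̃, w̃⟩_V = 1, and ⟨w̃, Ω_k w̃⟩_V = 0 for every k = 1,…,l. -/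
/-!
Write `a k = B w (Ω k w)`, `A = ∑ k, a k • Ω k` and `r = ∑ k, a k ^ 2`. The operator `A` is symmetric,
commutes with `P`, and satisfies `A (Ω k v) + Ω k (A v) = -2 a k v`, hence `A² = -r`. These relations
give, for `v = s w + A w`,
`B v v = s² + 2 s r - r` and `B v (Ω k v) = a k (s² - 2 s - r)`.
A single choice `s = 1 + √(1 + r)`, a root of `s² - 2 s - r`, therefore removes all the products
`B v (Ω k v)` at once, and then `B v v = 2 s (1 + r) > 0`, so `v` can be normalized.
-/

/-- As in the orthogonalization lemma, but in the presence of an involution `P` commuting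
with all the operators `Ω_k`: the corrected vector can be chosen to remain a fixed vector
of `P`. -/
theorem orthogonalization_family_fixed
    (V : Type*) [AddCommGroup V] [Module ℝ V] [FiniteDimensional ℝ V]
    (B : LinearMap.BilinForm ℝ V)
    (hsymm : ∀ x y : V, B x y = B y x)
    (hnd : LinearMap.BilinForm.Nondegenerate B)
    (l : ℕ) (Ω : Fin l → V →ₗ[ℝ] V)
    (hΩsym : ∀ k (v w : V), B (Ω k v) w = B v (Ω k w))
    (hΩ2 : ∀ k, Ω k ∘ₗ Ω k = -LinearMap.id)
    (hΩanti : ∀ k j, k ≠ j → Ω k ∘ₗ Ω j = -(Ω j ∘ₗ Ω k))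
    (P : V →ₗ[ℝ] V)
    (hP2 : P ∘ₗ P = LinearMap.id)
    (hPΩ : ∀ k, P ∘ₗ Ω k = Ω k ∘ₗ P)
    (w : V) (hPw : P w = w) (hw : B w w = 1) :
    ∃ wt : V, P wt = wt ∧ B wt wt = 1 ∧ ∀ k, B wt (Ω k wt) = 0 := by
  set a : Fin l → ℝ := fun k => B w (Ω k w) with ha
  set r : ℝ := ∑ k, a k ^ 2 with hr
  have hr0 : 0 ≤ r := Finset.sum_nonneg fun k _ => sq_nonneg _
  set A : V →ₗ[ℝ] V := ∑ k, a k • Ω k with hA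
  have hAv : ∀ v, A v = ∑ k, a k • Ω k v := fun v => by simp [hA]
  have h2 : ∀ k v, Ω k (Ω k v) = -v := fun k v => by
    simpa using LinearMap.congr_fun (hΩ2 k) v
  have hanti : ∀ k j, k ≠ j → ∀ v, Ω k (Ω j v) = -Ω j (Ω k v) := fun k j h v => by
    simpa using LinearMap.congr_fun (hΩanti k j h) v
  have hAsym : ∀ v x, B (A v) x = B v (A x) := fun v x => by
    simp [hAv, hΩsym]
  have hPA : ∀ v, P (A v) = A (P v) := fun v => by
    have h : ∀ k, P (Ω k v) = Ω k (P v) := fun k => by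
      simpa using LinearMap.congr_fun (hPΩ k) v
    simp [hAv, h]
  have hAΩ : ∀ k v, A (Ω k v) = -Ω k (A v) - (2 * a k) • v := fun k v => by
    have h : A (Ω k v) + Ω k (A v) = -((2 * a k) • v) := by
      simp only [hAv, map_sum, map_smul, ← Finset.sum_add_distrib]
      rw [Finset.sum_eq_single k]
      · rw [h2]; module
      · intro j _ hj
        rw [hanti j k hj]; module
      · simp
    rw [eq_sub_of_add_eq h]; abel
  have hAA : ∀ v, A (A v) = -(r • v) := fun v => by
    have h : A (A v) = -A (A v) - (2 * r) • v := by
      conv_lhs => rw [hAv v]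
      rw [map_sum, hAv (A v), hr, Finset.mul_sum, Finset.sum_smul, ← Finset.sum_neg_distrib,
        ← Finset.sum_sub_distrib]
      refine Finset.sum_congr rfl fun k _ => ?_
      rw [map_smul, hAΩ]; module
    have h' : (2 : ℝ) • A (A v) = (2 : ℝ) • -(r • v) := by
      rw [two_smul]; nth_rewrite 1 [h]; module
    exact smul_right_injective V (two_ne_zero (α := ℝ)) h'
  have hwA : B w (A w) = r := by
    simp [hAv, hr, ha, sq]
  have hAAw : B (A w) (A w) = -r := by
    rw [hAsym, hAA]; simp [hw]
  have hc : ∀ k, B (A w) (Ω k w) = -a k := fun k => by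
    have h : B (A w) (Ω k w) = -B (A w) (Ω k w) - 2 * a k := by
      conv_lhs => rw [hAsym, hAΩ]
      simp only [map_sub, map_neg, map_smul, smul_eq_mul, hw]
      rw [← hΩsym, hsymm]; ring
    linarith
  have hd : ∀ k, B (A w) (Ω k (A w)) = -(r * a k) := fun k => by
    rw [hAsym, hAΩ, hAA]
    simp only [map_sub, map_neg, map_smul, smul_eq_mul, hwA]
    change _ - _ = -(r * B w (Ω k w))
    simp only [ha]; ring
  set s : ℝ := 1 + √(1 + r) with hs
  have hs0 : 0 < s := by positivity
  have hs2 : s ^ 2 = 2 * s + r := by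
    have := Real.sq_sqrt (show 0 ≤ 1 + r by linarith)
    rw [hs]; linear_combination this
  set v : V := s • w + A w with hv
  have hvv : B v v = 2 * s * (1 + r) := by
    simp only [hv, map_add, map_smul, LinearMap.add_apply, LinearMap.smul_apply, smul_eq_mul,
      hw, hwA, hAAw, hsymm (A w) w]
    linear_combination hs2
  have hvΩ : ∀ k, B v (Ω k v) = 0 := fun k => by
    have e : B w (Ω k (A w)) = -a k := by rw [← hΩsym, hsymm, hc]
    have e' : B w (Ω k w) = a k := rfl
    simp only [hv, map_add, map_smul, LinearMap.add_apply, LinearMap.smul_apply, smul_eq_mul,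
      hc, hd, e, e']
    linear_combination a k * hs2
  have hpos : 0 < B v v := by rw [hvv]; positivity
  refine ⟨(√(B v v))⁻¹ • v, ?_, ?_, fun k => ?_⟩
  · simp [hv, hPA, hPw]
  · have := Real.mul_self_sqrt hpos.le
    have h0 := (Real.sqrt_pos.2 hpos).ne'
    simp only [map_smul, LinearMap.smul_apply, smul_eq_mul]
    field_simp
    linarith
  · simp [hvΩ]
end

section
/- Let (V, ⟨·,·⟩_V, J_1,…,J_{r+1}) be an admissible Cl_{r,1}-module (so J_i∘J_i = −Id for 1 ≤ i ≤ r and J_{r+1}∘J_{r+1} = Id). Let U ⊆ V be a subspace invariant under J_1,…,J_r admitting an orthonormal basis u_1,…,u_l such that each J_i with i ≤ r permutes this basis up to sign and ⟨J_i u_α, u_β⟩_V ∈ {0,1,−1} for all i ≤ r and all α,β. Set Ũ = J_{r+1}(U) and W = U + Ũ, and suppose that U and Ũ are orthogonal with respect to ⟨·,·⟩_V. Then W is invariant under all of J_1,…,J_{r+1}, the restriction of ⟨·,·⟩_V to W is nondegenerate, the vectors u_1,…,u_l, J_{r+1}u_1,…,J_{r+1}u_l form an orthonormal basis of W which every J_k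 (k = 1,…,r+1) permutes up to sign, and ⟨J_k w, w'⟩_V ∈ {0,1,−1} for all k and all basis vectors w, w'; i.e. (W, ⟨·,·⟩_V|_W) is an admissible integral Cl_{r,1}-module. -/
/-!
Write `T` for the last operator. Skewness together with `T ∘ T = id` gives
`B (T x) (T y) = -B x y`, so `T` is an anti-isometry: it carries the orthonormal family `u` to an
orthonormal family with opposite signs. As `U ⊥ T(U)`, the combined family
`c = (u, T ∘ u)` is orthonormal, and it spans `W = U + T(U)`. The operator `T` exchanges the two
halves of `c`, while every other `J i` anticommutes with `T` and hence permutes `T ∘ u` up to sign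
because it so permutes `u`. Everything else is formal: a family with `B (c a) (c b) = 0` for
`a ≠ b` and `B (c a) (c a) = ±1` is linearly independent and `B` is nondegenerate on its span
(`restrict_span_nondegenerate`); an operator permuting it up to sign preserves its span
(`map_mem_span_of_perm`) and has matrix entries in `{0, 1, -1}` (`pairing_of_perm`).
-/

section OrthonormalFamilies

variable {V ι : Type*} [AddCommGroup V] [Module ℝ V]

theorem restrict_span_nondegenerate (B : LinearMap.BilinForm ℝ V) (c : ι → V)
    (hind : LinearIndependent ℝ c)
    (h0 : ∀ a b, a ≠ b → B (c a) (c b) = 0) (h1 : ∀ a, B (c a) (c a) ≠ 0) :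
    LinearMap.BilinForm.Nondegenerate
      (LinearMap.BilinForm.restrict B (Submodule.span ℝ (Set.range c))) := by
  refine LinearMap.IsOrthoᵢ.nondegenerate_of_not_isOrtho_basis_self (Module.Basis.span hind) ?_ ?_
  · intro a b hab
    simpa [Function.onFun, Module.Basis.span_apply] using h0 a b hab
  · intro a
    simpa [Module.Basis.span_apply] using h1 a

theorem map_mem_span_of_perm (c : ι → V) (T : V →ₗ[ℝ] V)
    (hT : ∀ a, ∃ b, T (c a) = c b ∨ T (c a) = -c b) (x : V)
    (hx : x ∈ Submodule.span ℝ (Set.range c)) : T x ∈ Submodule.span ℝ (Set.range c) := by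
  suffices h : Submodule.span ℝ (Set.range c) ≤ (Submodule.span ℝ (Set.range c)).comap T from h hx
  rw [Submodule.span_le]
  rintro _ ⟨a, rfl⟩
  obtain ⟨b, hb⟩ := hT a
  have hmem : c b ∈ Submodule.span ℝ (Set.range c) := Submodule.subset_span ⟨b, rfl⟩
  rcases hb with hb | hb
  · simpa [hb] using hmem
  · simpa [hb] using hmem

theorem pairing_of_perm (B : LinearMap.BilinForm ℝ V) (c : ι → V) (T : V →ₗ[ℝ] V)
    (h0 : ∀ a b, a ≠ b → B (c a) (c b) = 0)
    (h1 : ∀ a, B (c a) (c a) = 1 ∨ B (c a) (c a) = -1)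
    (hT : ∀ a, ∃ b, T (c a) = c b ∨ T (c a) = -c b) (a b : ι) :
    B (T (c a)) (c b) = 0 ∨ B (T (c a)) (c b) = 1 ∨ B (T (c a)) (c b) = -1 := by
  obtain ⟨d, hd⟩ := hT a
  by_cases hdb : d = b
  · subst hdb
    rcases hd with hd | hd <;> rcases h1 d with h | h <;> simp [hd, h]
  · rcases hd with hd | hd <;> simp [hd, h0 d b hdb]

end OrthonormalFamilies

/-- From an integral structure on a `Cl_{r,0}`-invariant subspace `U` of an admissible
`Cl_{r,1}`-module, the space `W = U ⊕ J_{r+1}(U)` (assuming `U ⊥ J_{r+1}(U)`) is an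
admissible integral `Cl_{r,1}`-submodule with orthonormal basis
`u_1, …, u_l, J_{r+1}u_1, …, J_{r+1}u_l` permuted up to sign by all the operators. -/
theorem Cl_r1_integral_from_Cl_r0 (r : ℕ)
    (V : Type*) [AddCommGroup V] [Module ℝ V] [FiniteDimensional ℝ V]
    (B : LinearMap.BilinForm ℝ V)
    (hsymm : ∀ x y : V, B x y = B y x)
    (hnd : LinearMap.BilinForm.Nondegenerate B)
    (J : Fin (r + 1) → V →ₗ[ℝ] V)
    (hJneg : ∀ i : Fin (r + 1), (i : ℕ) < r → J i ∘ₗ J i = -LinearMap.id)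
    (hJlast : J (Fin.last r) ∘ₗ J (Fin.last r) = LinearMap.id)
    (hJanti : ∀ i j, i ≠ j → J i ∘ₗ J j = -(J j ∘ₗ J i))
    (hJskew : ∀ k (u v : V), B (J k u) v = -B u (J k v))
    (U : Submodule ℝ V)
    (hUinv : ∀ i : Fin (r + 1), (i : ℕ) < r → ∀ x ∈ U, J i x ∈ U)
    (l : ℕ) (u : Fin l → V)
    (humem : ∀ α, u α ∈ U)
    (huind : LinearIndependent ℝ u)
    (huspan : Submodule.span ℝ (Set.range u) = U)
    (huon0 : ∀ α β, α ≠ β → B (u α) (u β) = 0)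
    (huon1 : ∀ α, B (u α) (u α) = 1 ∨ B (u α) (u α) = -1)
    (huperm : ∀ i : Fin (r + 1), (i : ℕ) < r →
      ∀ α, ∃ β, J i (u α) = u β ∨ J i (u α) = -u β)
    (huint : ∀ i : Fin (r + 1), (i : ℕ) < r →
      ∀ α β, B (J i (u α)) (u β) = 0 ∨ B (J i (u α)) (u β) = 1 ∨ B (J i (u α)) (u β) = -1)
    (horth : ∀ x ∈ U, ∀ y ∈ Submodule.map (J (Fin.last r)) U, B x y = 0) :
    ∀ W : Submodule ℝ V, W = U ⊔ Submodule.map (J (Fin.last r)) U →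
      ((∀ k : Fin (r + 1), ∀ x ∈ W, J k x ∈ W) ∧
       LinearMap.BilinForm.Nondegenerate (LinearMap.BilinForm.restrict B W) ∧
       ∀ c : Fin l ⊕ Fin l → V,
         c = Sum.elim u (fun α => J (Fin.last r) (u α)) →
         (LinearIndependent ℝ c ∧
          Submodule.span ℝ (Set.range c) = W ∧
          (∀ a b, a ≠ b → B (c a) (c b) = 0) ∧
          (∀ a, B (c a) (c a) = 1 ∨ B (c a) (c a) = -1) ∧
          (∀ (k : Fin (r + 1)) a, ∃ b, J k (c a) = c b ∨ J k (c a) = -c b) ∧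
          (∀ (k : Fin (r + 1)) a b, B (J k (c a)) (c b) = 0 ∨ B (J k (c a)) (c b) = 1 ∨
            B (J k (c a)) (c b) = -1))) := by
  rintro W rfl
  set T := J (Fin.last r) with hTdef
  have hTT : ∀ x, T (T x) = x := fun x => LinearMap.congr_fun hJlast x
  have hBT : ∀ x y, B (T x) (T y) = -B x y := fun x y => by rw [hJskew, hTT]
  have hTmem : ∀ α, T (u α) ∈ Submodule.map T U := fun α =>
    Submodule.mem_map_of_mem (humem α)
  set c : Fin l ⊕ Fin l → V := Sum.elim u (fun α => T (u α)) with hc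
  have hspan : Submodule.span ℝ (Set.range c) = U ⊔ Submodule.map T U := by
    rw [hc, Set.Sum.elim_range, Submodule.span_union, huspan,
      show (fun α => T (u α)) = T ∘ u from rfl, Set.range_comp, Submodule.span_image, huspan]
  have h0 : ∀ a b, a ≠ b → B (c a) (c b) = 0 := by
    rintro (α | α) (β | β) hab
    · exact huon0 α β fun h => hab (congrArg _ h)
    · exact horth _ (humem α) _ (hTmem β)
    · exact (hsymm _ _).trans (horth _ (humem β) _ (hTmem α))
    · change B (T (u α)) (T (u β)) = 0
      rw [hBT, huon0 α β fun h => hab (congrArg _ h), neg_zero]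
  have h1 : ∀ a, B (c a) (c a) = 1 ∨ B (c a) (c a) = -1 := by
    rintro (α | α)
    · exact huon1 α
    · change B (T (u α)) (T (u α)) = 1 ∨ B (T (u α)) (T (u α)) = -1
      rw [hBT]
      rcases huon1 α with h | h <;> simp [h]
  have h1ne : ∀ a, B (c a) (c a) ≠ 0 := fun a => by
    rcases h1 a with h | h <;> simp [h]
  have hperm : ∀ (k : Fin (r + 1)) a, ∃ b, J k (c a) = c b ∨ J k (c a) = -c b := by
    intro k a
    by_cases hk : k = Fin.last r
    · subst hk
      rcases a with α | α
      · exact ⟨Sum.inr α, Or.inl rfl⟩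
      · exact ⟨Sum.inl α, Or.inl (hTT (u α))⟩
    · have hkr : (k : ℕ) < r := Fin.val_lt_last hk
      rcases a with α | α
      · obtain ⟨β, hβ⟩ := huperm k hkr α
        exact ⟨Sum.inl β, hβ⟩
      · obtain ⟨β, hβ⟩ := huperm k hkr α
        have hanti : J k (T (u α)) = -T (J k (u α)) := LinearMap.congr_fun (hJanti k _ hk) (u α)
        refine ⟨Sum.inr β, ?_⟩
        change J k (T (u α)) = T (u β) ∨ J k (T (u α)) = -T (u β)
        rcases hβ with hβ | hβ <;> simp [hanti, hβ]
  have hind : LinearIndependent ℝ c := LinearMap.linearIndependent_of_isOrthoᵢ h0 h1ne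
  rw [← hspan]
  refine ⟨fun k => map_mem_span_of_perm c (J k) (hperm k),
    restrict_span_nondegenerate B c hind h0 h1ne, ?_⟩
  rintro _ rfl
  exact ⟨hind, rfl, h0, h1, hperm, fun k => pairing_of_perm B c (J k) h0 h1 (hperm k)⟩
end
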